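/- Gentle measurement lemma: let ρ be a d×d complex positive semidefinite matrix with trace(ρ) ≤ 1, let X be a d×d Hermitian matrix with 0 ≤ X ≤ 1 (i.e. both X and 1 − X positive semidefinite), and suppose Re(trace(ρX)) ≥ 1 − ε for some ε ≥ 0. Then ‖ρ − √X ρ √X‖₁ ≤ √(8ε), where √X is the positive semidefinite square root of X. -/

import Mathlib

open scoped ComplexConjugate ComplexOrder MatrixOrder

/-- A density matrix: positive semidefinite with trace one. -/
def IsDensityMatrix {n : Type*} [Fintype n] (ρ : Matrix n n ℂ) : Prop :=
  ρ.PosSemidef ∧ ρ.trace = 1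

/-- The von Neumann entropy (in bits) of a (Hermitian) matrix:
`S(ρ) = −∑ᵢ λᵢ log₂ λᵢ` over the eigenvalues, with `0·log₂ 0 = 0`. -/
noncomputable def vnEntropy {n : Type*} [Fintype n] [DecidableEq n]
    (ρ : Matrix n n ℂ) : ℝ :=
  if h : ρ.IsHermitian then -∑ i, h.eigenvalues i * Real.logb 2 (h.eigenvalues i) else 0

/-- The trace norm of a Hermitian matrix: the sum of the absolute values of
its eigenvalues. -/
noncomputable def traceNorm {n : Type*} [Fintype n] [DecidableEq n]
    (M : Matrix n n ℂ) : ℝ :=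
  if h : M.IsHermitian then ∑ i, |h.eigenvalues i| else 0

open scoped Matrix.Norms.L2Operator in
lemma gm_sqrt_le_one {d : ℕ} (X : Matrix (Fin d) (Fin d) ℂ) (hX1 : (1 - X).PosSemidef) :
    (1 - CFC.sqrt X).PosSemidef := by
  have h : X ≤ 1 := Matrix.le_iff.2 hX1
  have h2 := CFC.sqrt_le_sqrt X 1 h
  rw [CFC.sqrt_one] at h2
  exact Matrix.le_iff.1 h2

lemma gm_trace_nonneg {d : ℕ} (B K : Matrix (Fin d) (Fin d) ℂ) (hK : K.PosSemidef) :
    0 ≤ (B.conjTranspose * B * K).trace.re := by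
  have h := (hK.mul_mul_conjTranspose_same B).trace_nonneg
  rw [Matrix.trace_mul_comm, ← Matrix.mul_assoc] at h
  exact (Complex.le_def.1 h).1

/-- Euclidean norm of a column. -/
noncomputable def gmCol {d : ℕ} (P : Matrix (Fin d) (Fin d) ℂ) (i : Fin d) :
    EuclideanSpace ℂ (Fin d) := WithLp.toLp 2 (fun j => P j i)

lemma gm_diag {d : ℕ} (P : Matrix (Fin d) (Fin d) ℂ) (i : Fin d) :
    ((P.conjTranspose * P) i i).re = ‖gmCol P i‖ ^ 2 := by
  rw [EuclideanSpace.norm_sq_eq, Matrix.mul_apply, Complex.re_sum]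
  refine Finset.sum_congr rfl fun j _ => ?_
  simp only [gmCol, Matrix.conjTranspose_apply, Complex.sq_norm, Complex.normSq_apply]
  simp

lemma gm_sum {d : ℕ} (P : Matrix (Fin d) (Fin d) ℂ) :
    ∑ i, ‖gmCol P i‖ ^ 2 = (P.conjTranspose * P).trace.re := by
  simp_rw [Matrix.trace, Complex.re_sum, Matrix.diag_apply, gm_diag]

lemma gm_sum_unitary {d : ℕ} (P U : Matrix (Fin d) (Fin d) ℂ) (hU : U * U.conjTranspose = 1) :
    ∑ i, ‖gmCol (P * U) i‖ ^ 2 = (P.conjTranspose * P).trace.re := by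
  rw [gm_sum, Matrix.conjTranspose_mul, Matrix.mul_assoc, Matrix.trace_mul_comm]
  simp only [Matrix.mul_assoc, hU, Matrix.mul_one]

/-- the gentle measurement lemma. -/
theorem gentle_measurement {d : ℕ} (ρ X : Matrix (Fin d) (Fin d) ℂ)
    (hρ : ρ.PosSemidef) (htr : ρ.trace.re ≤ 1)
    (hX : X.PosSemidef) (hX1 : (1 - X).PosSemidef)
    (ε : ℝ) (hε : 0 ≤ ε) (h : 1 - ε ≤ ((ρ * X).trace).re) :
    traceNorm (ρ - CFC.sqrt X * ρ * CFC.sqrt X) ≤ Real.sqrt (8 * ε) := by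
  obtain ⟨B, rfl⟩ : ∃ B : Matrix (Fin d) (Fin d) ℂ, ρ = B.conjTranspose * B := by
    obtain ⟨B, hB⟩ := CStarAlgebra.nonneg_iff_eq_star_mul_self.1 hρ.nonneg
    exact ⟨B, hB⟩
  have hT := gm_sqrt_le_one X hX1
  have hSS : CFC.sqrt X * CFC.sqrt X = X := CFC.sqrt_mul_sqrt_self X hX.nonneg
  have hS : (CFC.sqrt X).PosSemidef := Matrix.nonneg_iff_posSemidef.1 (CFC.sqrt_nonneg X)
  generalize CFC.sqrt X = S at *
  have hSh : S.conjTranspose = S := hS.1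
  have hTh : (1 - S).conjTranspose = 1 - S := hT.1
  have hK : (S - X).PosSemidef := by
    have h1 := hT.conjTranspose_mul_mul_same S
    have h2 := hS.conjTranspose_mul_mul_same (1 - S)
    rw [hSh] at h1
    rw [hTh] at h2
    convert h1.add h2 using 1
    rw [← hSS]
    noncomm_ring
  have e1 := gm_trace_nonneg B _ hK
  have e2 := gm_trace_nonneg B _ hX1
  have e3 : (((B * (1 - S)).conjTranspose * (B * (1 - S))).trace).re ≤ ε := by
    have : ((B * (1 - S)).conjTranspose * (B * (1 - S))).trace
        = (B.conjTranspose * B * (1 - S - S + X)).trace := by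
      rw [Matrix.conjTranspose_mul, hTh, Matrix.mul_assoc, Matrix.trace_mul_comm, ← hSS]
      congr 1
      noncomm_ring
    rw [this]
    simp only [Matrix.mul_sub, Matrix.mul_add, Matrix.trace_sub, Matrix.trace_add, Matrix.mul_one,
      Complex.sub_re, Complex.add_re] at *
    linarith
  have e4 : (((B * S).conjTranspose * (B * S)).trace).re ≤ 1 := by
    have : ((B * S).conjTranspose * (B * S)).trace = (B.conjTranspose * B * X).trace := by
      rw [Matrix.conjTranspose_mul, hSh, Matrix.mul_assoc, Matrix.trace_mul_comm, ← hSS]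
      simp only [Matrix.mul_assoc]
    rw [this]
    simp only [Matrix.mul_sub, Matrix.trace_sub, Matrix.mul_one, Complex.sub_re] at *
    linarith
  unfold traceNorm
  split_ifs with hM
  swap
  · positivity
  set U : Matrix (Fin d) (Fin d) ℂ := hM.eigenvectorUnitary.1 with hUdef
  have hU : U * U.conjTranspose = 1 := Unitary.mul_star_self_of_mem hM.eigenvectorUnitary.2
  have hlam : ∀ i, hM.eigenvalues i
      = ‖gmCol (B * U) i‖ ^ 2 - ‖gmCol (B * S * U) i‖ ^ 2 := by
    intro i
    have hd := hM.conjStarAlgAut_star_eigenvectorUnitary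
    rw [Unitary.conjStarAlgAut_star_apply] at hd
    have hd2 := congrArg Complex.re (congrFun (congrFun hd i) i)
    simp only [Matrix.diagonal_apply_eq, Function.comp] at hd2
    rw [← gm_diag, ← gm_diag, ← Complex.sub_re, ← Matrix.sub_apply]
    refine hd2.symm.trans ?_
    congr 2
    simp only [Matrix.conjTranspose_mul, hSh, Matrix.star_eq_conjTranspose, ← hUdef]
    noncomm_ring
  have hcol : ∀ i, gmCol (B * U) i - gmCol (B * S * U) i = gmCol (B * (1 - S) * U) i := by
    intro i
    have : B * (1 - S) * U = B * U - B * S * U := by noncomm_ring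
    rw [this]
    rfl
  have hb : ∀ i, |hM.eigenvalues i| ≤ ‖gmCol (B * (1 - S) * U) i‖ * ‖gmCol (B * U) i‖
      + ‖gmCol (B * (1 - S) * U) i‖ * ‖gmCol (B * S * U) i‖ := by
    intro i
    rw [hlam, sq_sub_sq, abs_mul, abs_of_nonneg (by positivity), ← hcol, ← mul_add, mul_comm]
    gcongr
    exact abs_norm_sub_norm_le _ _
  have c1 := Real.sum_mul_le_sqrt_mul_sqrt Finset.univ
    (fun i => ‖gmCol (B * (1 - S) * U) i‖) (fun i => ‖gmCol (B * U) i‖)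
  have c2 := Real.sum_mul_le_sqrt_mul_sqrt Finset.univ
    (fun i => ‖gmCol (B * (1 - S) * U) i‖) (fun i => ‖gmCol (B * S * U) i‖)
  rw [gm_sum_unitary _ _ hU, gm_sum_unitary _ _ hU] at c1 c2
  have s1 := Real.sqrt_le_sqrt e3
  have s2 := Real.sqrt_le_one.2 e4
  have s3 := Real.sqrt_le_one.2 htr
  have m1 := mul_le_mul s1 s3 (Real.sqrt_nonneg _) (Real.sqrt_nonneg _)
  have m2 := mul_le_mul s1 s2 (Real.sqrt_nonneg _) (Real.sqrt_nonneg _)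
  calc _ ≤ _ := Finset.sum_le_sum fun i _ => hb i
    _ ≤ 2 * Real.sqrt ε := by
      rw [Finset.sum_add_distrib]
      linarith
    _ ≤ Real.sqrt (8 * ε) := by
      apply Real.le_sqrt_of_sq_le
      rw [mul_pow, Real.sq_sqrt hε]
      linarith
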